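/- arXiv:1405.0934 — 2 statements merged into one kernel-verified Lean document; each statement's English description precedes it below -/
import Mathlib

section
/- For all real x with 0 < x < π/2, the following inequalities hold: 2/π + ((π − 2)/π)·cos x < (sin x)/x, and (cos(x/2))^(4/3) < (sin x)/x < (2·2^(2/3)/π)·((1 + cos x)/2)^(2/3) < (4/π)·(1 + cos x)/2. -/
/-!
Put `t = x / 2`, so that `sinc x = sinc t * cos t` and `(1 + cos x) / 2 = cos t ^ 2`. By the
Cusa–Huygens inequality `3 * sinc y < 2 + cos y` at `y = 2 * t`, the quotient `sinc t ^ 3 / cos t`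
increases on `[0, π / 2)`. Its values at `0` and `π / 4` are `1` and `32 / π ^ 3`, which give the
bounds for `sinc x` in terms of `cos t ^ (4 / 3)`. The lower one says `cos t < sinc t ^ 3`, and
AM-GM turns this into Wilker's inequality `2 < sinc t ^ 2 + tan t / t`, which is the positivity of
the derivative of `(1 - sinc x) / (1 - cos x)`. Comparing that quotient with its value at `π / 2`
gives the bound that is linear in `cos x`.
-/

open Real Set

variable {x : ℝ}

lemma cos_lt_one_of_pos_of_lt_two_pi (h₀ : 0 < x) (hπ : x < 2 * π) : cos x < 1 :=
  (cos_le_one x).lt_of_ne fun h ↦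
    h₀.ne' ((cos_eq_one_iff_of_lt_of_lt (by linarith) hπ).1 h)

lemma sinc_pos (h₀ : 0 < x) (hπ : x < π) : 0 < sinc x := by
  rw [sinc_of_ne_zero h₀.ne']
  exact div_pos (sin_pos_of_pos_of_lt_pi h₀ hπ) h₀

lemma sinc_mul_self (x : ℝ) : sinc x * x = sin x := by
  rcases eq_or_ne x 0 with rfl | hx
  · simp
  · rw [sinc_of_ne_zero hx, div_mul_cancel₀ _ hx]

lemma sinc_two_mul (x : ℝ) : sinc (2 * x) = sinc x * cos x := by
  rcases eq_or_ne x 0 with rfl | hx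
  · simp
  · rw [sinc_of_ne_zero hx, sinc_of_ne_zero (by positivity), sin_two_mul]
    field_simp

lemma hasDerivAt_sinc (hx : x ≠ 0) : HasDerivAt sinc ((cos x - sinc x) / x) x := by
  have hquot := (hasDerivAt_sin x).div (hasDerivAt_id x) hx
  refine (hquot.congr_of_eventuallyEq ?_).congr_deriv ?_
  · filter_upwards [isOpen_ne.mem_nhds hx] with y hy using sinc_of_ne_zero hy
  · rw [sinc_of_ne_zero hx]
    simp only [id_eq]
    field_simp

lemma mul_sin_lt_two_mul_one_sub_cos (h₀ : 0 < x) (hπ : x < π) :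
    x * sin x < 2 * (1 - cos x) := by
  obtain ⟨t, rfl⟩ : ∃ t, x = 2 * t := ⟨x / 2, by ring⟩
  have hsin : 0 < sin t := sin_pos_of_pos_of_lt_pi (by linarith) (by linarith)
  have hcos : 0 < cos t := cos_pos_of_mem_Ioo ⟨by linarith, by linarith⟩
  have htan : t * cos t < sin t := by
    rw [← lt_div_iff₀ hcos, ← tan_eq_sin_div_cos]
    exact lt_tan (by linarith) (by linarith)
  calc 2 * t * sin (2 * t) = 4 * sin t * (t * cos t) := by rw [sin_two_mul]; ring
    _ < 4 * sin t * sin t := by gcongr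
    _ = 2 * (1 - cos (2 * t)) := by rw [cos_two_mul, cos_sq']; ring

lemma strictMonoOn_mul_two_add_cos_sub_three_mul_sin :
    StrictMonoOn (fun x ↦ x * (2 + cos x) - 3 * sin x) (Icc 0 π) := by
  refine strictMonoOn_of_hasDerivWithinAt_pos (f' := fun x ↦ 2 * (1 - cos x) - x * sin x)
    (convex_Icc 0 π) (by fun_prop) (fun x _ ↦ ?_) (fun x hx ↦ ?_)
  · have hderiv := ((hasDerivAt_id x).mul ((hasDerivAt_cos x).const_add 2)).sub
      ((hasDerivAt_sin x).const_mul 3)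
    refine (hderiv.congr_deriv ?_).hasDerivWithinAt
    simp only [id_eq]
    ring
  · rw [interior_Icc] at hx
    exact sub_pos.2 (mul_sin_lt_two_mul_one_sub_cos hx.1 hx.2)

theorem three_mul_sinc_lt_two_add_cos (hx : 0 < x) : 3 * sinc x < 2 + cos x := by
  suffices 3 * sin x < x * (2 + cos x) by
    rwa [sinc_of_ne_zero hx.ne', ← mul_div_assoc, div_lt_iff₀' hx]
  rcases le_or_gt x π with hπ | hπ
  · have hlt := strictMonoOn_mul_two_add_cos_sub_three_mul_sin
      (left_mem_Icc.2 pi_pos.le) ⟨hx.le, hπ⟩ hx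
    simp only [zero_mul, sin_zero, mul_zero, sub_zero] at hlt
    exact sub_pos.1 hlt
  · calc 3 * sin x ≤ 3 := by linarith [sin_le_one x]
      _ < x := pi_gt_three.trans hπ
      _ ≤ x * (2 + cos x) := le_mul_of_one_le_right hx.le (by linarith [neg_one_le_cos x])

lemma hasDerivAt_sinc_pow_three_div_cos (hx : x ≠ 0) (hcos : cos x ≠ 0) :
    HasDerivAt (fun x ↦ sinc x ^ 3 / cos x)
      (sinc x ^ 2 * (2 + cos (2 * x) - 3 * sinc (2 * x)) / (x * cos x ^ 2)) x := by
  refine (((hasDerivAt_sinc hx).pow 3).div (hasDerivAt_cos x) hcos).congr_deriv ?_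
  have hpyth : (sinc x * x) ^ 2 = 1 - cos x ^ 2 := by rw [sinc_mul_self, sin_sq]
  rw [sinc_two_mul, cos_two_mul, ← sinc_mul_self x, Pi.pow_apply]
  field_simp
  push_cast
  linear_combination sinc x ^ 2 * hpyth

theorem strictMonoOn_sinc_pow_three_div_cos :
    StrictMonoOn (fun x ↦ sinc x ^ 3 / cos x) (Ico 0 (π / 2)) := by
  have hcos : ∀ x ∈ Ico 0 (π / 2), 0 < cos x := fun x hx ↦
    cos_pos_of_mem_Ioo ⟨by linarith [hx.1, pi_pos], hx.2⟩
  refine strictMonoOn_of_deriv_pos (convex_Ico _ _)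
    (.div (by fun_prop) (by fun_prop) fun x hx ↦ (hcos x hx).ne') fun x hx ↦ ?_
  have hc := hcos x (interior_subset hx)
  rw [interior_Ico] at hx
  have hx₀ : 0 < x := hx.1
  have hsinc : 0 < sinc x := sinc_pos hx₀ (by linarith [hx.2])
  have hcusa : 0 < 2 + cos (2 * x) - 3 * sinc (2 * x) :=
    sub_pos.2 (three_mul_sinc_lt_two_add_cos (by positivity))
  rw [(hasDerivAt_sinc_pow_three_div_cos hx₀.ne' hc.ne').deriv]
  positivity

theorem cos_lt_sinc_pow_three (h₀ : 0 < x) (hπ : x < π / 2) : cos x < sinc x ^ 3 := by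
  have hcos : 0 < cos x := cos_pos_of_mem_Ioo ⟨by linarith, hπ⟩
  have hlt := strictMonoOn_sinc_pow_three_div_cos
    (left_mem_Ico.2 pi_div_two_pos) ⟨h₀.le, hπ⟩ h₀
  simpa only [sinc_zero, cos_zero, one_pow, div_one, one_lt_div hcos] using hlt

lemma sinc_pi_div_four_pow_three_div_cos : sinc (π / 4) ^ 3 / cos (π / 4) = 32 / π ^ 3 := by
  have hsqrt : √2 ^ 2 = 2 := sq_sqrt zero_le_two
  rw [sinc_of_ne_zero (by positivity), sin_pi_div_four, cos_pi_div_four]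
  field_simp
  rw [hsqrt]
  norm_num

theorem sinc_pow_three_lt_mul_cos (h₀ : 0 < x) (hπ : x < π / 4) :
    sinc x ^ 3 < 32 / π ^ 3 * cos x := by
  have hcos : 0 < cos x := cos_pos_of_mem_Ioo ⟨by linarith, by linarith⟩
  rw [← div_lt_iff₀ hcos, ← sinc_pi_div_four_pow_three_div_cos]
  exact strictMonoOn_sinc_pow_three_div_cos ⟨h₀.le, by linarith⟩
    ⟨by positivity, by linarith⟩ hπ

lemma rpow_natCast_div_natCast_pow (hx : 0 ≤ x) (m : ℕ) {n : ℕ} (hn : n ≠ 0) :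
    (x ^ (m / n : ℝ)) ^ n = x ^ m := by
  rw [← rpow_mul_natCast hx, div_mul_cancel₀ _ (Nat.cast_ne_zero.2 hn), rpow_natCast]

theorem cos_half_rpow_lt_sinc (h₀ : 0 < x) (hπ : x < π) :
    cos (x / 2) ^ (4 / 3 : ℝ) < sinc x := by
  obtain ⟨t, rfl⟩ : ∃ t, x = 2 * t := ⟨x / 2, by ring⟩
  rw [mul_div_cancel_left₀ t two_ne_zero]
  have hcos : 0 < cos t := cos_pos_of_mem_Ioo ⟨by linarith, by linarith⟩
  refine lt_of_pow_lt_pow_left₀ 3 (sinc_pos h₀ hπ).le ?_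
  calc (cos t ^ (4 / 3 : ℝ)) ^ 3 = cos t ^ 4 :=
        mod_cast rpow_natCast_div_natCast_pow hcos.le 4 three_ne_zero
    _ = cos t * cos t ^ 3 := by ring
    _ < sinc t ^ 3 * cos t ^ 3 := by
        gcongr
        exact cos_lt_sinc_pow_three (by linarith) (by linarith)
    _ = sinc (2 * t) ^ 3 := by rw [sinc_two_mul, mul_pow]

theorem sinc_lt_mul_cos_half_rpow (h₀ : 0 < x) (hπ : x < π / 2) :
    sinc x < 2 * 2 ^ (2 / 3 : ℝ) / π * cos (x / 2) ^ (4 / 3 : ℝ) := by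
  obtain ⟨t, rfl⟩ : ∃ t, x = 2 * t := ⟨x / 2, by ring⟩
  rw [mul_div_cancel_left₀ t two_ne_zero]
  have hcos : 0 < cos t := cos_pos_of_mem_Ioo ⟨by linarith, by linarith⟩
  have htwo : ((2 : ℝ) ^ (2 / 3 : ℝ)) ^ 3 = 2 ^ 2 :=
    mod_cast rpow_natCast_div_natCast_pow zero_le_two 2 three_ne_zero
  have hcos_pow : (cos t ^ (4 / 3 : ℝ)) ^ 3 = cos t ^ 4 :=
    mod_cast rpow_natCast_div_natCast_pow hcos.le 4 three_ne_zero
  refine lt_of_pow_lt_pow_left₀ 3 (by positivity) ?_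
  calc sinc (2 * t) ^ 3 = sinc t ^ 3 * cos t ^ 3 := by rw [sinc_two_mul, mul_pow]
    _ < 32 / π ^ 3 * cos t * cos t ^ 3 := by
        gcongr
        exact sinc_pow_three_lt_mul_cos (by linarith) (by linarith)
    _ = (2 * 2 ^ (2 / 3 : ℝ) / π * cos t ^ (4 / 3 : ℝ)) ^ 3 := by
        rw [mul_pow, div_pow, mul_pow, htwo, hcos_pow]
        ring

lemma one_add_cos_div_two_rpow (hx : x ∈ Icc (-π) π) (a : ℝ) :
    ((1 + cos x) / 2) ^ a = cos (x / 2) ^ (2 * a) := by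
  have hcos : 0 ≤ cos (x / 2) :=
    cos_nonneg_of_mem_Icc ⟨by linarith [hx.1], by linarith [hx.2]⟩
  rw [rpow_mul hcos, rpow_two, cos_sq, mul_div_cancel₀ x two_ne_zero]
  congr 1
  ring

theorem two_lt_sinc_sq_add_tan_div_self (h₀ : 0 < x) (hπ : x < π / 2) :
    2 < sinc x ^ 2 + tan x / x := by
  have hcos : 0 < cos x := cos_pos_of_mem_Ioo ⟨by linarith, hπ⟩
  have hsinc : 0 < sinc x := sinc_pos h₀ (by linarith)
  calc 2 = 2 * sinc x * (sinc x)⁻¹ := by field_simp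
    _ ≤ sinc x ^ 2 + (sinc x)⁻¹ ^ 2 := two_mul_le_add_sq _ _
    _ = sinc x ^ 2 + sinc x / sinc x ^ 3 := by field_simp
    _ < sinc x ^ 2 + sinc x / cos x := by
        gcongr
        exact cos_lt_sinc_pow_three h₀ hπ
    _ = sinc x ^ 2 + tan x / x := by
        rw [sinc_of_ne_zero h₀.ne', tan_eq_sin_div_cos, div_right_comm]

lemma hasDerivAt_one_sub_sinc_div_one_sub_cos (hx : x ≠ 0) (hcos_half : cos (x / 2) ≠ 0)
    (hcos : 1 - cos x ≠ 0) :
    HasDerivAt (fun x ↦ (1 - sinc x) / (1 - cos x))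
      (sin x / 2 * (sinc (x / 2) ^ 2 + tan (x / 2) / (x / 2) - 2) / (1 - cos x) ^ 2) x := by
  obtain ⟨t, rfl⟩ : ∃ t, x = 2 * t := ⟨x / 2, by ring⟩
  rw [mul_div_cancel_left₀ t two_ne_zero] at hcos_half ⊢
  have ht : t ≠ 0 := right_ne_zero_of_mul hx
  refine (((hasDerivAt_sinc hx).const_sub 1).div ((hasDerivAt_cos (2 * t)).const_sub 1)
    hcos).congr_deriv ?_
  congr 1
  have hpyth : (sinc t * t) ^ 2 = 1 - cos t ^ 2 := by rw [sinc_mul_self, sin_sq]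
  rw [sinc_two_mul, cos_two_mul, sin_two_mul, tan_eq_sin_div_cos, ← sinc_mul_self t]
  field_simp
  linear_combination 2 * (2 * cos t ^ 2 - 1 - sinc t * cos t) * hpyth

theorem strictMonoOn_one_sub_sinc_div_one_sub_cos :
    StrictMonoOn (fun x ↦ (1 - sinc x) / (1 - cos x)) (Ioc 0 π) := by
  have hcos : ∀ x ∈ Ioc 0 π, 0 < 1 - cos x := fun x hx ↦
    sub_pos.2 (cos_lt_one_of_pos_of_lt_two_pi hx.1 (by linarith [hx.2, pi_pos]))
  refine strictMonoOn_of_deriv_pos (convex_Ioc _ _)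
    (.div (by fun_prop) (by fun_prop) fun x hx ↦ (hcos x hx).ne') fun x hx ↦ ?_
  have hcos_x := hcos x (interior_subset hx)
  rw [interior_Ioc] at hx
  obtain ⟨hx₀, hxπ⟩ := hx
  have hsin : 0 < sin x := sin_pos_of_pos_of_lt_pi hx₀ hxπ
  have hcos_half : 0 < cos (x / 2) := cos_pos_of_mem_Ioo ⟨by linarith, by linarith⟩
  have hwilker : 0 < sinc (x / 2) ^ 2 + tan (x / 2) / (x / 2) - 2 :=
    sub_pos.2 (two_lt_sinc_sq_add_tan_div_self (by linarith) (by linarith))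
  rw [(hasDerivAt_one_sub_sinc_div_one_sub_cos hx₀.ne' hcos_half.ne' hcos_x.ne').deriv]
  positivity

theorem two_div_pi_add_mul_cos_lt_sinc (h₀ : 0 < x) (hπ : x < π / 2) :
    2 / π + (π - 2) / π * cos x < sinc x := by
  have hcos : 0 < 1 - cos x :=
    sub_pos.2 (cos_lt_one_of_pos_of_lt_two_pi h₀ (by linarith))
  have hlt : (1 - sinc x) / (1 - cos x) < (1 - sinc (π / 2)) / (1 - cos (π / 2)) :=
    strictMonoOn_one_sub_sinc_div_one_sub_cos ⟨h₀, by linarith⟩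
      ⟨by positivity, by linarith⟩ hπ
  have hend : (1 - sinc (π / 2)) / (1 - cos (π / 2)) = 1 - 2 / π := by
    rw [sinc_of_ne_zero (by positivity), sin_pi_div_two, cos_pi_div_two, sub_zero, div_one,
      one_div_div]
  rw [hend, div_lt_iff₀ hcos] at hlt
  rw [sub_div, div_self pi_ne_zero]
  linarith

theorem sin_div_cos_bounds (x : ℝ) (hx0 : 0 < x) (hxpi : x < Real.pi / 2) :
    (2 / Real.pi + ((Real.pi - 2) / Real.pi) * Real.cos x < Real.sin x / x) ∧
    Real.cos (x / 2) ^ ((4 : ℝ) / 3) < Real.sin x / x ∧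
    Real.sin x / x < (2 * 2 ^ ((2 : ℝ) / 3) / Real.pi) * ((1 + Real.cos x) / 2) ^ ((2 : ℝ) / 3) ∧
    (2 * 2 ^ ((2 : ℝ) / 3) / Real.pi) * ((1 + Real.cos x) / 2) ^ ((2 : ℝ) / 3) <
      (4 / Real.pi) * ((1 + Real.cos x) / 2) := by
  have hcos : 0 < cos x := cos_pos_of_mem_Ioo ⟨by linarith, hxpi⟩
  rw [← sinc_of_ne_zero hx0.ne']
  refine ⟨two_div_pi_add_mul_cos_lt_sinc hx0 hxpi, cos_half_rpow_lt_sinc hx0 (by linarith),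
    ?_, ?_⟩
  · rw [one_add_cos_div_two_rpow ⟨by linarith, by linarith⟩,
      show (2 : ℝ) * (2 / 3) = 4 / 3 by norm_num]
    exact sinc_lt_mul_cos_half_rpow hx0 hxpi
  · calc 2 * 2 ^ (2 / 3 : ℝ) / π * ((1 + cos x) / 2) ^ (2 / 3 : ℝ)
        = 2 / π * (1 + cos x) ^ (2 / 3 : ℝ) := by
          rw [div_rpow (by positivity) zero_le_two]
          field_simp
      _ < 2 / π * (1 + cos x) := by
          gcongr
          exact rpow_lt_self_of_one_lt (by linarith) (by norm_num)
      _ = 4 / π * ((1 + cos x) / 2) := by ring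
end

section
/- For all real x with 0 < x < π/2, the following two-sided inequality holds with α = 16/π − 4 and β = (π² − 8)/2: 16·(π − x)/(4π² + α·(2x − π)²) < (sin x)/x < 16·(π − x)/(4π² + β·(2x − π)²). -/
/-!
Put `t = π / 2 - x`. Both inequalities say on which side of zero
`(π ^ 2 + c * t ^ 2) * cos t - (π ^ 2 - 4 * t ^ 2)` lies, for `c = 16 / π - 4` and
`c = (π ^ 2 - 8) / 2`. This function is even in `t`, and it vanishes at `π / 2` and to second order
at `0`; the first value of `c` is the one for which the zero at `π / 2` is double, the second the
one for which the second derivative vanishes at `0`. Either way one more zero inside `(0, π / 2)`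
would, by repeated use of Rolle's theorem, give two zeros there of the third derivative. But the
third derivative vanishes only where `(π ^ 2 - 6 * c + c * t ^ 2) * (tan t / t) = 6 * c`, and the
left side is strictly increasing. Hence the sign is constant on `(0, π / 2)`, and it can be read off
at `π / 3`, where the value is `π ^ 2 / 18 * (c - 1)`.
-/

open Real Set

theorem exists_deriv_eq_zero_pair {f : ℝ → ℝ} {a b c : ℝ} (hf : ContinuousOn f (Icc a c))
    (hab : a < b) (hbc : b < c) (hfab : f a = f b) (hfbc : f b = f c) :
    ∃ u ∈ Ioo a b, ∃ v ∈ Ioo b c, deriv f u = 0 ∧ deriv f v = 0 := by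
  obtain ⟨u, hu, hfu⟩ := exists_deriv_eq_zero hab (hf.mono (Icc_subset_Icc_right hbc.le)) hfab
  obtain ⟨v, hv, hfv⟩ := exists_deriv_eq_zero hbc (hf.mono (Icc_subset_Icc_left hab.le)) hfbc
  exact ⟨u, hu, v, hv, hfu, hfv⟩

theorem strictMonoOn_tan_div_self : StrictMonoOn (fun t ↦ tan t / t) (Ioo 0 (π / 2)) := by
  have hasDerivAt_tan_div {t : ℝ} (ht : t ∈ Ioo 0 (π / 2)) :
      HasDerivAt (fun t ↦ tan t / t) ((1 / cos t ^ 2 * t - tan t * 1) / t ^ 2) t :=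
    (hasDerivAt_tan_of_mem_Ioo ⟨by linarith [ht.1, pi_pos], ht.2⟩).div (hasDerivAt_id t) ht.1.ne'
  refine strictMonoOn_of_deriv_pos (convex_Ioo _ _)
    (fun t ht ↦ (hasDerivAt_tan_div ht).continuousAt.continuousWithinAt) fun t ht ↦ ?_
  rw [interior_Ioo] at ht
  have hcos : 0 < cos t := cos_pos_of_mem_Ioo ⟨by linarith [ht.1, pi_pos], ht.2⟩
  have sin_mul_cos_lt : sin t * cos t < t := calc
    sin t * cos t ≤ sin t * 1 := by
      gcongr
      · exact sin_nonneg_of_nonneg_of_le_pi ht.1.le (by linarith [ht.2, pi_pos])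
      · exact cos_le_one t
    _ < t := by simpa using sin_lt ht.1
  have numerator_eq : 1 / cos t ^ 2 * t - tan t * 1 = (t - sin t * cos t) / cos t ^ 2 := by
    rw [tan_eq_sin_div_cos]
    field_simp
  rw [(hasDerivAt_tan_div ht).deriv, numerator_eq]
  exact div_pos (div_pos (sub_pos.2 sin_mul_cos_lt) (pow_pos hcos 2)) (pow_pos ht.1 2)

theorem strictMonoOn_quadratic_mul_tan_div_self {a c : ℝ} (ha : 0 ≤ a) (hc : 0 < c) :
    StrictMonoOn (fun t ↦ (a + c * t ^ 2) * (tan t / t)) (Ioo 0 (π / 2)) := by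
  intro u hu v hv huv
  have hu₀ : 0 < u := hu.1
  have tan_div_pos : 0 < tan u / u := div_pos (tan_pos_of_pos_of_lt_pi_div_two hu.1 hu.2) hu.1
  have tan_div_lt : tan u / u < tan v / v := strictMonoOn_tan_div_self hu hv huv
  dsimp only
  gcongr

theorem hasDerivAt_const_mul_sq (k t : ℝ) :
    HasDerivAt (fun t : ℝ ↦ k * t ^ 2) (k * (2 * t)) t := by
  simpa using (hasDerivAt_pow 2 t).const_mul k

/-- The difference of the two sides of `π ^ 2 - 4 * t ^ 2 < (π ^ 2 + c * t ^ 2) * cos t`, which is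
the lower bound for `sin x / x` after clearing denominators and putting `t = π / 2 - x`; the upper
bound is the reverse inequality. -/
noncomputable def redhefferGap (c t : ℝ) : ℝ :=
  (π ^ 2 + c * t ^ 2) * cos t - (π ^ 2 - 4 * t ^ 2)

variable {c t x : ℝ}

theorem continuous_redhefferGap (c : ℝ) : Continuous (redhefferGap c) := by
  unfold redhefferGap
  fun_prop

theorem redhefferGap_abs (c t : ℝ) : redhefferGap c |t| = redhefferGap c t := by
  simp only [redhefferGap, cos_abs, sq_abs]

theorem redhefferGap_zero (c : ℝ) : redhefferGap c 0 = 0 := by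
  simp [redhefferGap]

theorem redhefferGap_pi_div_two (c : ℝ) : redhefferGap c (π / 2) = 0 := by
  simp only [redhefferGap, cos_pi_div_two]
  ring

theorem redhefferGap_pi_div_three (c : ℝ) : redhefferGap c (π / 3) = π ^ 2 / 18 * (c - 1) := by
  simp only [redhefferGap, cos_pi_div_three]
  ring

theorem deriv_redhefferGap (c : ℝ) : deriv (redhefferGap c) =
    fun t ↦ 2 * c * t * cos t - (π ^ 2 + c * t ^ 2) * sin t + 8 * t := by
  funext t
  refine HasDerivAt.deriv <|
    ((((hasDerivAt_const_mul_sq c t).const_add (π ^ 2)).mul (hasDerivAt_cos t)).sub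
      ((hasDerivAt_const_mul_sq 4 t).const_sub (π ^ 2))).congr_deriv ?_
  ring

theorem continuous_deriv_redhefferGap (c : ℝ) : Continuous (deriv (redhefferGap c)) := by
  rw [deriv_redhefferGap]
  fun_prop

theorem deriv_deriv_redhefferGap (c : ℝ) : deriv (deriv (redhefferGap c)) =
    fun t ↦ (2 * c - π ^ 2 - c * t ^ 2) * cos t - 4 * c * t * sin t + 8 := by
  rw [deriv_redhefferGap]
  funext t
  refine HasDerivAt.deriv <|
    ((((hasDerivAt_const_mul (2 * c)).mul (hasDerivAt_cos t)).sub
      (((hasDerivAt_const_mul_sq c t).const_add (π ^ 2)).mul (hasDerivAt_sin t))).add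
      (hasDerivAt_const_mul 8)).congr_deriv ?_
  ring

theorem continuous_deriv_deriv_redhefferGap (c : ℝ) :
    Continuous (deriv (deriv (redhefferGap c))) := by
  rw [deriv_deriv_redhefferGap]
  fun_prop

theorem deriv_deriv_deriv_redhefferGap (c : ℝ) : deriv (deriv (deriv (redhefferGap c))) =
    fun t ↦ (π ^ 2 - 6 * c + c * t ^ 2) * sin t - 6 * c * t * cos t := by
  rw [deriv_deriv_redhefferGap]
  funext t
  refine HasDerivAt.deriv <|
    (((((hasDerivAt_const_mul_sq c t).const_sub (2 * c - π ^ 2)).mul (hasDerivAt_cos t)).sub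
      ((hasDerivAt_const_mul (4 * c)).mul (hasDerivAt_sin t))).add_const 8).congr_deriv ?_
  ring

theorem deriv_redhefferGap_pi_div_two (c : ℝ) :
    deriv (redhefferGap c) (π / 2) = π ^ 2 / 4 * (16 / π - 4 - c) := by
  simp only [deriv_redhefferGap, cos_pi_div_two, sin_pi_div_two]
  field_simp
  ring

theorem deriv_redhefferGap_zero (c : ℝ) : deriv (redhefferGap c) 0 = 0 := by
  simp [deriv_redhefferGap]

theorem deriv_deriv_redhefferGap_zero (c : ℝ) :
    deriv (deriv (redhefferGap c)) 0 = 2 * (c - (π ^ 2 - 8) / 2) := by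
  simp only [deriv_deriv_redhefferGap, cos_zero, sin_zero]
  ring

theorem quadratic_mul_tan_div_self_eq (ht : t ∈ Ioo 0 (π / 2))
    (h : deriv (deriv (deriv (redhefferGap c))) t = 0) :
    (π ^ 2 - 6 * c + c * t ^ 2) * (tan t / t) = 6 * c := by
  have ht₀ : 0 < t := ht.1
  have hcos : 0 < cos t := cos_pos_of_mem_Ioo ⟨by linarith [pi_pos], ht.2⟩
  rw [deriv_deriv_deriv_redhefferGap, sub_eq_zero] at h
  rw [tan_eq_sin_div_cos]
  field_simp
  linarith

theorem deriv_deriv_redhefferGap_ne_zero {p q r : ℝ} (hc : 0 < c) (hcπ : 6 * c ≤ π ^ 2)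
    (hp : 0 ≤ p) (hpq : p < q) (hqr : q < r) (hr : r < π / 2)
    (hfp : deriv (deriv (redhefferGap c)) p = 0) (hfq : deriv (deriv (redhefferGap c)) q = 0) :
    deriv (deriv (redhefferGap c)) r ≠ 0 := by
  intro hfr
  obtain ⟨u, hu, v, hv, hfu, hfv⟩ :=
    exists_deriv_eq_zero_pair (continuous_deriv_deriv_redhefferGap c).continuousOn hpq hqr
      (hfp.trans hfq.symm) (hfq.trans hfr.symm)
  have hu_mem : u ∈ Ioo 0 (π / 2) := ⟨hp.trans_lt hu.1, hu.2.trans (hqr.trans hr)⟩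
  have hv_mem : v ∈ Ioo 0 (π / 2) := ⟨hp.trans_lt (hpq.trans hv.1), hv.2.trans hr⟩
  have huv : u < v := hu.2.trans hv.1
  have hmono := strictMonoOn_quadratic_mul_tan_div_self (sub_nonneg.2 hcπ) hc hu_mem hv_mem huv
  exact hmono.ne ((quadratic_mul_tan_div_self_eq hu_mem hfu).trans
    (quadratic_mul_tan_div_self_eq hv_mem hfv).symm)

theorem exists_zeros_deriv_of_redhefferGap_eq_zero (ht : t ∈ Ioo 0 (π / 2))
    (h : redhefferGap c t = 0) :
    ∃ u v w, 0 < u ∧ u < v ∧ v < w ∧ w < π / 2 ∧ deriv (deriv (redhefferGap c)) u = 0 ∧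
      deriv (deriv (redhefferGap c)) v = 0 ∧ deriv (redhefferGap c) w = 0 := by
  obtain ⟨s, hs, w, hw, hfs, hfw⟩ :=
    exists_deriv_eq_zero_pair (continuous_redhefferGap c).continuousOn ht.1 ht.2
      ((redhefferGap_zero c).trans h.symm) (h.trans (redhefferGap_pi_div_two c).symm)
  obtain ⟨u, hu, v, hv, hfu, hfv⟩ :=
    exists_deriv_eq_zero_pair (continuous_deriv_redhefferGap c).continuousOn hs.1
      (hs.2.trans hw.1) ((deriv_redhefferGap_zero c).trans hfs.symm) (hfs.trans hfw.symm)
  exact ⟨u, v, w, hu.1, hu.2.trans hv.1, hv.2, hw.2, hfu, hfv, hfw⟩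

theorem redhefferGap_ne_zero_of_deriv_pi_div_two_eq_zero (hc : 0 < c) (hcπ : 6 * c ≤ π ^ 2)
    (h : deriv (redhefferGap c) (π / 2) = 0) (ht : t ∈ Ioo 0 (π / 2)) :
    redhefferGap c t ≠ 0 := by
  intro hft
  obtain ⟨u, v, w, hu, huv, hvw, hw, hfu, hfv, hfw⟩ :=
    exists_zeros_deriv_of_redhefferGap_eq_zero ht hft
  obtain ⟨r, hr, hfr⟩ :=
    exists_deriv_eq_zero hw (continuous_deriv_redhefferGap c).continuousOn (hfw.trans h.symm)
  exact deriv_deriv_redhefferGap_ne_zero hc hcπ hu.le huv (hvw.trans hr.1) hr.2 hfu hfv hfr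

theorem redhefferGap_ne_zero_of_deriv_deriv_zero_eq_zero (hc : 0 < c) (hcπ : 6 * c ≤ π ^ 2)
    (h : deriv (deriv (redhefferGap c)) 0 = 0) (ht : t ∈ Ioo 0 (π / 2)) :
    redhefferGap c t ≠ 0 := by
  intro hft
  obtain ⟨u, v, w, hu, huv, hvw, hw, hfu, hfv, -⟩ :=
    exists_zeros_deriv_of_redhefferGap_eq_zero ht hft
  exact deriv_deriv_redhefferGap_ne_zero hc hcπ le_rfl hu huv (hvw.trans hw) h hfu hfv

theorem pi_div_three_mem_Ioo : π / 3 ∈ Ioo 0 (π / 2) :=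
  ⟨by positivity, by linarith [pi_pos]⟩

theorem one_lt_sixteen_div_pi_sub_four : 1 < 16 / π - 4 := by
  rw [lt_sub_iff_add_lt, lt_div_iff₀ pi_pos]
  linarith [pi_lt_d2]

theorem nine_lt_pi_sq : 9 < π ^ 2 := by
  nlinarith [pi_gt_three]

theorem redhefferGap_sixteen_div_pi_sub_four_pos (ht : t ∈ Ioo 0 (π / 2)) :
    0 < redhefferGap (16 / π - 4) t := by
  have one_lt := one_lt_sixteen_div_pi_sub_four
  have six_mul_le : 6 * (16 / π - 4) ≤ π ^ 2 := by
    have : 16 / π < 16 / 3 := by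
      gcongr
      exact pi_gt_three
    linarith [nine_lt_pi_sq]
  have ne_zero : ∀ s ∈ Ioo 0 (π / 2), redhefferGap (16 / π - 4) s ≠ 0 := fun s hs ↦
    redhefferGap_ne_zero_of_deriv_pi_div_two_eq_zero (by linarith) six_mul_le
      (by rw [deriv_redhefferGap_pi_div_two, sub_self, mul_zero]) hs
  refine isPreconnected_Ioo.lt_of_ne (continuous_redhefferGap _).continuousOn ne_zero
    ⟨π / 3, pi_div_three_mem_Ioo, ?_⟩ ht
  rw [redhefferGap_pi_div_three]
  exact mul_pos (by positivity) (sub_pos.2 one_lt)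

theorem redhefferGap_pi_sq_sub_eight_div_two_neg (ht : t ∈ Ioo 0 (π / 2)) :
    redhefferGap ((π ^ 2 - 8) / 2) t < 0 := by
  have pi_sq_gt := nine_lt_pi_sq
  have pi_sq_lt : π ^ 2 < 10 := by nlinarith [pi_pos, pi_lt_d2]
  have ne_zero : ∀ s ∈ Ioo 0 (π / 2), redhefferGap ((π ^ 2 - 8) / 2) s ≠ 0 := fun s hs ↦
    redhefferGap_ne_zero_of_deriv_deriv_zero_eq_zero (by linarith) (by linarith)
      (by rw [deriv_deriv_redhefferGap_zero, sub_self, mul_zero]) hs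
  refine isPreconnected_Ioo.gt_of_ne (continuous_redhefferGap _).continuousOn ne_zero
    ⟨π / 3, pi_div_three_mem_Ioo, ?_⟩ ht
  rw [redhefferGap_pi_div_three]
  exact mul_neg_of_pos_of_neg (by positivity) (by linarith)

theorem sin_mul_sub_eq_four_mul_redhefferGap (c x : ℝ) :
    sin x * (4 * π ^ 2 + c * (2 * x - π) ^ 2) - 16 * (π - x) * x =
      4 * redhefferGap c (π / 2 - x) := by
  rw [redhefferGap, cos_pi_div_two_sub]
  ring

theorem div_lt_sin_div_iff_redhefferGap_pos (hc : 0 ≤ c) (hx : 0 < x) :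
    16 * (π - x) / (4 * π ^ 2 + c * (2 * x - π) ^ 2) < sin x / x ↔
      0 < redhefferGap c (π / 2 - x) := by
  rw [div_lt_div_iff₀ (by positivity) hx, ← sub_pos, sin_mul_sub_eq_four_mul_redhefferGap,
    mul_pos_iff_of_pos_left four_pos]

theorem sin_div_lt_div_iff_redhefferGap_neg (hc : 0 ≤ c) (hx : 0 < x) :
    sin x / x < 16 * (π - x) / (4 * π ^ 2 + c * (2 * x - π) ^ 2) ↔
      redhefferGap c (π / 2 - x) < 0 := by
  rw [div_lt_div_iff₀ hx (by positivity), ← sub_neg, sin_mul_sub_eq_four_mul_redhefferGap]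
  constructor <;> intro h <;> linarith

theorem sin_div_shifted_redheffer_general (x : ℝ) (hx0 : 0 < x) (hxpi : x < π) (hx : x ≠ π / 2) :
    16 * (π - x) / (4 * π ^ 2 + (16 / π - 4) * (2 * x - π) ^ 2) < sin x / x ∧
    sin x / x < 16 * (π - x) / (4 * π ^ 2 + ((π ^ 2 - 8) / 2) * (2 * x - π) ^ 2) := by
  have abs_mem : |π / 2 - x| ∈ Ioo 0 (π / 2) :=
    ⟨abs_pos.2 (sub_ne_zero.2 hx.symm), abs_lt.2 ⟨by linarith, by linarith⟩⟩
  constructor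
  · rw [div_lt_sin_div_iff_redhefferGap_pos (by linarith [one_lt_sixteen_div_pi_sub_four]) hx0,
      ← redhefferGap_abs]
    exact redhefferGap_sixteen_div_pi_sub_four_pos abs_mem
  · rw [sin_div_lt_div_iff_redhefferGap_neg (by linarith [nine_lt_pi_sq]) hx0, ← redhefferGap_abs]
    exact redhefferGap_pi_sq_sub_eight_div_two_neg abs_mem

theorem sin_div_shifted_redheffer (x : ℝ) (hx0 : 0 < x) (hxpi : x < Real.pi / 2) :
    16 * (Real.pi - x) / (4 * Real.pi ^ 2 + (16 / Real.pi - 4) * (2 * x - Real.pi) ^ 2) <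
      Real.sin x / x ∧
    Real.sin x / x <
      16 * (Real.pi - x) / (4 * Real.pi ^ 2 + ((Real.pi ^ 2 - 8) / 2) * (2 * x - Real.pi) ^ 2) :=
  sin_div_shifted_redheffer_general x hx0 (by linarith) hxpi.ne
end
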